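/- Let R be an associative ring with identity and Q a quiver. For every X ∈ Rep(Q,R), every Y ∈ Rep(Q^op,R^op), and every abelian group G, there is a natural isomorphism Hom_{Rep(Q^op,R^op)}(Y, Hom(X,G)) ≅ Hom_{Rep(Q,R)}(X, Hom(Y,G)), induced vertexwise by the swap isomorphisms Hom_{R^op}(Y(i), Hom_Z(X(i),G)) ≅ Hom_R(X(i), Hom_Z(Y(i),G)). -/

import Mathlib

open CategoryTheory CategoryTheory.Limits Opposite
open scoped DirectSum

universe w v u

namespace QuiverGF


section Cat

variable {A : Type u} [Category.{v} A] [Abelian A]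

/-- `Ext¹(X,Y) = 0`, expressed as: every short exact sequence `0 → Y → E → X → 0` splits. -/
def ext1Zero (X Y : A) : Prop :=
  ∀ (E : A) (f : Y ⟶ E) (g : E ⟶ X) (w : f ≫ g = 0),
    (ShortComplex.mk f g w).ShortExact → ∃ s : X ⟶ E, s ≫ g = 𝟙 X

/-- `extHigherZero n X Y` encodes `Ext^{n+1}(X,Y) = 0`, defined by dimension shifting along
short exact sequences `0 → Y → I → Z → 0` with `I` injective. -/
def extHigherZero : ℕ → A → A → Prop
  | 0 => fun X Y => ext1Zero X Y
  | n + 1 => fun X Y => ∀ (I Z : A) (f : Y ⟶ I) (g : I ⟶ Z) (w : f ≫ g = 0),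
      Injective I → (ShortComplex.mk f g w).ShortExact → extHigherZero n X Z

/-- The right `Ext¹`-orthogonal class. -/
def rightPerp (S : Set A) : Set A := {Y | ∀ X ∈ S, ext1Zero X Y}

/-- The left `Ext¹`-orthogonal class. -/
def leftPerp (S : Set A) : Set A := {X | ∀ Y ∈ S, ext1Zero X Y}

/-- `(X, Y)` is a cotorsion pair. -/
structure IsCotorsionPair (X Y : Set A) : Prop where
  right_eq : Y = rightPerp X
  left_eq : X = leftPerp Y

/-- Completeness of a pair of classes: every object admits approximation sequences. -/
def IsCompleteCP (X Y : Set A) : Prop :=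
  (∀ M : A, ∃ (YM XM : A) (f : M ⟶ YM) (g : YM ⟶ XM) (w : f ≫ g = 0),
     (ShortComplex.mk f g w).ShortExact ∧ YM ∈ Y ∧ XM ∈ X) ∧
  (∀ M : A, ∃ (YM XM : A) (f : YM ⟶ XM) (g : XM ⟶ M) (w : f ≫ g = 0),
     (ShortComplex.mk f g w).ShortExact ∧ YM ∈ Y ∧ XM ∈ X)

/-- Heredity: `Ext^i(X,Y) = 0` for all `i ≥ 1`. -/
def IsHereditaryCP (X Y : Set A) : Prop :=
  ∀ M ∈ X, ∀ N ∈ Y, ∀ n : ℕ, extHigherZero n M N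

/-- A thick class of objects. -/
structure IsThick (W : Set A) : Prop where
  summand : ∀ Z ∈ W, ∀ (X : A) (i : X ⟶ Z) (r : Z ⟶ X), i ≫ r = 𝟙 X → X ∈ W
  ext_closed : ∀ (S : ShortComplex A), S.ShortExact → S.X₁ ∈ W → S.X₃ ∈ W → S.X₂ ∈ W
  ker_epi : ∀ (S : ShortComplex A), S.ShortExact → S.X₂ ∈ W → S.X₃ ∈ W → S.X₁ ∈ W
  coker_mono : ∀ (S : ShortComplex A), S.ShortExact → S.X₁ ∈ W → S.X₂ ∈ W → S.X₃ ∈ W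

/-- A Hovey triple. -/
structure IsHoveyTriple (C W F : Set A) : Prop where
  thick : IsThick W
  cp1 : IsCotorsionPair C (W ∩ F)
  cp1_complete : IsCompleteCP C (W ∩ F)
  cp2 : IsCotorsionPair (C ∩ W) F
  cp2_complete : IsCompleteCP (C ∩ W) F

/-- A hereditary Hovey triple. -/
structure IsHereditaryHoveyTriple (C W F : Set A) extends IsHoveyTriple C W F : Prop where
  cp1_hereditary : IsHereditaryCP C (W ∩ F)
  cp2_hereditary : IsHereditaryCP (C ∩ W) F

/-- `f : C ⟶ M` is an `S`-cover of `M`. -/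
def IsCover (S : Set A) {C M : A} (f : C ⟶ M) : Prop :=
  C ∈ S ∧ (∀ C' ∈ S, ∀ g : C' ⟶ M, ∃ h : C' ⟶ C, h ≫ f = g) ∧
    (∀ h : C ⟶ C, h ≫ f = f → IsIso h)

/-- `f : M ⟶ E` is an `S`-envelope of `M`. -/
def IsEnvelope (S : Set A) {M E : A} (f : M ⟶ E) : Prop :=
  E ∈ S ∧ (∀ E' ∈ S, ∀ g : M ⟶ E', ∃ h : E ⟶ E', f ≫ h = g) ∧
    (∀ h : E ⟶ E, f ≫ h = f → IsIso h)

/-- A perfect pair of classes: X-covers and Y-envelopes always exist. -/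
def IsPerfectCP (X Y : Set A) : Prop :=
  (∀ M : A, ∃ (C : A) (f : C ⟶ M), IsCover X f) ∧
  (∀ M : A, ∃ (E : A) (f : M ⟶ E), IsEnvelope Y f)

/-- `W` is a cogenerator for `X`. -/
def IsCogenerator (W X : Set A) : Prop :=
  W ⊆ X ∧ ∀ M ∈ X, ∃ (W' X' : A) (f : M ⟶ W') (g : W' ⟶ X') (w : f ≫ g = 0),
    (ShortComplex.mk f g w).ShortExact ∧ W' ∈ W ∧ X' ∈ X

end Cat

section Quiver

variable (V : Type w) [Quiver.{w} V]

/-- A quiver is left rooted if it has no infinite sequence of arrows `• → • → • → ⋯`. -/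
def LeftRooted : Prop := ¬ ∃ f : ℕ → V, ∀ n : ℕ, Nonempty (f n ⟶ f (n + 1))

variable {V}
variable {A : Type u} [Category.{v} A]

/-- A vertex of `V`, seen as an object of the path category. -/
abbrev vtx (i : V) : Paths V := i

section Phi

variable [Abelian A] [HasCoproducts.{w} A]

/-- The canonical morphism `φᵢˣ : ⊕_{a : j ⟶ i} X(j) ⟶ X(i)`. -/
noncomputable def phi (X : Paths V ⥤ A) (i : V) :
    (∐ fun p : Σ j : V, j ⟶ i => X.obj (vtx p.1)) ⟶ X.obj (vtx i) :=
  Sigma.desc fun p => X.map p.2.toPath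

/-- The class `Φ(S)` of representations. -/
noncomputable def PhiClass (S : Set A) : Set (Paths V ⥤ A) :=
  {X | ∀ i : V, Mono (phi X i) ∧ X.obj (vtx i) ∈ S ∧ cokernel (phi X i) ∈ S}

end Phi

/-- The class of representations with all vertex values in `S`. -/
def RepClass (S : Set A) : Set (Paths V ⥤ A) := {X | ∀ i : V, X.obj (vtx i) ∈ S}

section Psi

variable [Abelian A] [HasProducts.{w} A]

/-- The canonical morphism `ψᵢʸ : Y(i) ⟶ Π_{a : i ⟶ j} Y(j)`. -/
noncomputable def psi (Y : Paths V ⥤ A) (i : V) :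
    Y.obj (vtx i) ⟶ ∏ᶜ fun p : Σ j : V, i ⟶ j => Y.obj (vtx p.1) :=
  Pi.lift fun p => Y.map p.2.toPath

/-- The class `Ψ(S)` of representations. -/
noncomputable def PsiClass (S : Set A) : Set (Paths V ⥤ A) :=
  {Y | ∀ i : V, Epi (psi Y i) ∧ Y.obj (vtx i) ∈ S ∧ kernel (psi Y i) ∈ S}

end Psi

end Quiver




section NcTensor

variable (R : Type u) [Ring R]

variable (E : Type u) [AddCommGroup E] [Module Rᵐᵒᵖ E]
variable (M : Type u) [AddCommGroup M] [Module R M]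

/-- The defining relations of the tensor product `E ⊗_R M` of a right `R`-module `E`
and a left `R`-module `M` over a (possibly noncommutative) ring `R`. -/
def ncRel : Submodule ℤ (TensorProduct ℤ E M) :=
  Submodule.span ℤ {z | ∃ (e : E) (r : R) (m : M),
    z = (MulOpposite.op r • e) ⊗ₜ[ℤ] m - e ⊗ₜ[ℤ] (r • m)}

/-- The tensor product `E ⊗_R M` of a right `R`-module `E` and a left `R`-module `M`. -/
abbrev NcTensor := TensorProduct ℤ E M ⧸ ncRel R E M

/-- The canonical generator `e ⊗ m` of `E ⊗_R M`. -/
noncomputable def NcTensor.tmul (e : E) (m : M) : NcTensor R E M :=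
  Submodule.Quotient.mk (e ⊗ₜ[ℤ] m)

variable {E M}
variable {E' : Type u} [AddCommGroup E'] [Module Rᵐᵒᵖ E']
variable {M' : Type u} [AddCommGroup M'] [Module R M']

/-- Functoriality of the tensor product. -/
noncomputable def NcTensor.map (f : E →ₗ[Rᵐᵒᵖ] E') (g : M →ₗ[R] M') :
    NcTensor R E M →ₗ[ℤ] NcTensor R E' M' :=
  Submodule.mapQ _ _
    (TensorProduct.map f.toAddMonoidHom.toIntLinearMap g.toAddMonoidHom.toIntLinearMap)
    (by
      refine Submodule.span_le.2 ?_
      rintro z ⟨e, r, m, rfl⟩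
      refine Submodule.mem_comap.2 (Submodule.subset_span ?_)
      refine ⟨f e, r, g m, ?_⟩
      refine (map_sub (TensorProduct.map f.toAddMonoidHom.toIntLinearMap
        g.toAddMonoidHom.toIntLinearMap) _ _).trans ?_
      rw [TensorProduct.map_tmul, TensorProduct.map_tmul]
      exact congrArg₂ (fun a b => a ⊗ₜ[ℤ] g m - f e ⊗ₜ[ℤ] b)
        (map_smul f (MulOpposite.op r) e) (map_smul g r m))

@[simp] lemma NcTensor.map_tmul (f : E →ₗ[Rᵐᵒᵖ] E') (g : M →ₗ[R] M') (e : E) (m : M) :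
    NcTensor.map R f g (NcTensor.tmul R E M e m) = NcTensor.tmul R E' M' (f e) (g m) := by
  rfl

end NcTensor

section ModuleClasses

variable (R : Type u) [Ring R]

/-- A left `R`-module is flat if tensoring with it preserves injections of right `R`-modules. -/
def IsFlatModule (M : ModuleCat.{u} R) : Prop :=
  ∀ (E E' : ModuleCat.{u} Rᵐᵒᵖ) (f : E ⟶ E'), Function.Injective f →
    Function.Injective (NcTensor.map R (f.hom : ↑E →ₗ[Rᵐᵒᵖ] ↑E') (LinearMap.id (M := ↑M)))

/-- Gorenstein flat left `R`-modules: cycles of exact complexes of flat modules which stay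
exact after tensoring with any injective right `R`-module. -/
def IsGorensteinFlatModule (M : ModuleCat.{u} R) : Prop :=
  ∃ (F : ℤ → ModuleCat.{u} R) (d : ∀ n : ℤ, F n ⟶ F (n + 1)),
    (∀ n, IsFlatModule R (F n)) ∧
    (∀ n, Function.Exact (d n) (d (n + 1))) ∧
    Nonempty (↑M ≃ₗ[R] ↥(LinearMap.ker ((d 0).hom : ↑(F 0) →ₗ[R] ↑(F (0 + 1))))) ∧
    ∀ (E : ModuleCat.{u} Rᵐᵒᵖ), Injective E → ∀ n : ℤ,
      Function.Exact (NcTensor.map R (LinearMap.id (M := ↑E)) ((d n).hom : ↑(F n) →ₗ[R] ↑(F (n + 1))))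
        (NcTensor.map R (LinearMap.id (M := ↑E)) ((d (n + 1)).hom : ↑(F (n + 1)) →ₗ[R] ↑(F (n + 1 + 1))))

/-- Projectively coresolved Gorenstein flat left `R`-modules. -/
def IsPGFModule (M : ModuleCat.{u} R) : Prop :=
  ∃ (P : ℤ → ModuleCat.{u} R) (d : ∀ n : ℤ, P n ⟶ P (n + 1)),
    (∀ n, Projective (P n)) ∧
    (∀ n, Function.Exact (d n) (d (n + 1))) ∧
    Nonempty (↑M ≃ₗ[R] ↥(LinearMap.ker ((d 0).hom : ↑(P 0) →ₗ[R] ↑(P (0 + 1))))) ∧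
    ∀ (E : ModuleCat.{u} Rᵐᵒᵖ), Injective E → ∀ n : ℤ,
      Function.Exact (NcTensor.map R (LinearMap.id (M := ↑E)) ((d n).hom : ↑(P n) →ₗ[R] ↑(P (n + 1))))
        (NcTensor.map R (LinearMap.id (M := ↑E)) ((d (n + 1)).hom : ↑(P (n + 1)) →ₗ[R] ↑(P (n + 1 + 1))))

/-- Gorenstein injective objects of an abelian category. -/
def IsGorensteinInjective {A : Type*} [Category A] [Abelian A] (M : A) : Prop :=
  ∃ (I : ℤ → A) (d : ∀ n : ℤ, I n ⟶ I (n + 1)),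
    (∀ n, Injective (I n)) ∧
    (∀ n, ∃ w : d n ≫ d (n + 1) = 0, (ShortComplex.mk (d n) (d (n + 1)) w).Exact) ∧
    Nonempty (M ≅ kernel (d 0)) ∧
    ∀ (E : A), Injective E → ∀ n : ℤ,
      Function.Exact (fun f : E ⟶ I n => f ≫ d n) (fun f : E ⟶ I (n + 1) => f ≫ d (n + 1))

end ModuleClasses



section Char

variable (R : Type u) [Ring R] (G : Type u) [AddCommGroup G]

section Left
variable (M : Type u) [AddCommGroup M] [Module R M]

/-- Right `R`-action on `Hom_ℤ(M, G)` for a left `R`-module `M`. -/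
instance : SMul Rᵐᵒᵖ (M →+ G) :=
  ⟨fun r f => f.comp (DistribMulAction.toAddMonoidHom M r.unop)⟩

@[simp] lemma op_smul_addHom_apply (r : Rᵐᵒᵖ) (f : M →+ G) (m : M) :
    (r • f) m = f (r.unop • m) := rfl

instance charRight : Module Rᵐᵒᵖ (M →+ G) where
  one_smul f := AddMonoidHom.ext fun m => by simp
  mul_smul r s f := AddMonoidHom.ext fun m => by simp [mul_smul]
  smul_zero r := AddMonoidHom.ext fun m => rfl
  smul_add r f g := AddMonoidHom.ext fun m => rfl
  add_smul r s f := AddMonoidHom.ext fun m => by simp [add_smul]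
  zero_smul f := AddMonoidHom.ext fun m => by simp

end Left

section Right
variable (N : Type u) [AddCommGroup N] [Module Rᵐᵒᵖ N]

/-- Left `R`-action on `Hom_ℤ(N, G)` for a right `R`-module `N`. -/
instance : SMul R (N →+ G) :=
  ⟨fun r f => f.comp (DistribMulAction.toAddMonoidHom N (MulOpposite.op r))⟩

@[simp] lemma smul_addHom_apply (r : R) (f : N →+ G) (n : N) :
    (r • f) n = f (MulOpposite.op r • n) := rfl

instance charLeft : Module R (N →+ G) where
  one_smul f := AddMonoidHom.ext fun n => by simp
  mul_smul r s f := AddMonoidHom.ext fun n => by simp [MulOpposite.op_mul, mul_smul]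
  smul_zero r := AddMonoidHom.ext fun n => rfl
  smul_add r f g := AddMonoidHom.ext fun n => rfl
  add_smul r s f := AddMonoidHom.ext fun n => by simp [add_smul]
  zero_smul f := AddMonoidHom.ext fun n => by simp

end Right

section Precomp

variable {R G}
variable {M N : Type u} [AddCommGroup M] [AddCommGroup N] [Module R M] [Module R N]

/-- Precomposition, as an `Rᵐᵒᵖ`-linear map between character modules. -/
def precompHom (h : M →ₗ[R] N) : (N →+ G) →ₗ[Rᵐᵒᵖ] (M →+ G) where
  toFun f := f.comp h.toAddMonoidHom
  map_add' f g := rfl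
  map_smul' r f := AddMonoidHom.ext fun m => by simp [map_smul]

variable {P Q : Type u} [AddCommGroup P] [AddCommGroup Q] [Module Rᵐᵒᵖ P] [Module Rᵐᵒᵖ Q]

/-- Precomposition, as an `R`-linear map between character modules of right modules. -/
def precompHomOp (h : P →ₗ[Rᵐᵒᵖ] Q) : (Q →+ G) →ₗ[R] (P →+ G) where
  toFun f := f.comp h.toAddMonoidHom
  map_add' f g := rfl
  map_smul' r f := AddMonoidHom.ext fun p => by simp [map_smul]

end Precomp

end Char


section Reps

variable (V : Type u) [Quiver.{u} V] (R : Type u) [Ring R]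

/-- The category of representations of the quiver `V` with values in left `R`-modules. -/
abbrev RepL := Paths V ⥤ ModuleCat.{u} R

/-- The category of representations of the opposite quiver with values in right `R`-modules. -/
abbrev RepR := Paths Vᵒᵖ ⥤ ModuleCat.{u} Rᵐᵒᵖ

/-- A vertex of `V`, seen as an object of the path category. -/
abbrev vtx' {V : Type u} [Quiver.{u} V] (i : V) : Paths V := i

/-- The representation `Hom(X, G) ∈ Rep(Qᵒᵖ, Rᵒᵖ)`, given vertexwise by `Hom_ℤ(X(i), G)`. -/
noncomputable def HomRepObj (X : RepL V R) (G : Type u) [AddCommGroup G] : RepR V R :=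
  Paths.lift
    { obj := fun x => ModuleCat.of Rᵐᵒᵖ (↑(X.obj (vtx' x.unop)) →+ G)
      map := fun {x y} a =>
        ModuleCat.ofHom (precompHom (G := G) ((X.map a.unop.toPath).hom : ↑(X.obj (vtx' y.unop)) →ₗ[R] ↑(X.obj (vtx' x.unop))) :
          _ →ₗ[Rᵐᵒᵖ] _) }

/-- The representation `Hom(Y, G) ∈ Rep(Q, R)` for `Y ∈ Rep(Qᵒᵖ, Rᵒᵖ)`. -/
noncomputable def HomRepObjOp (Y : RepR V R) (G : Type u) [AddCommGroup G] : RepL V R :=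
  Paths.lift
    { obj := fun i => ModuleCat.of R (↑(Y.obj (vtx' (op i))) →+ G)
      map := fun {i j} a =>
        ModuleCat.ofHom (precompHomOp (G := G) ((Y.map a.op.toPath).hom : ↑(Y.obj (vtx' (op j))) →ₗ[Rᵐᵒᵖ] ↑(Y.obj (vtx' (op i)))) :
          _ →ₗ[R] _) }

/-- The character representation `X⁺ = Hom(X, ℚ/ℤ)`. -/
noncomputable def charRep (X : RepL V R) : RepR V R :=
  HomRepObj V R X (ULift.{u} (AddCircle (1 : ℚ)))

section Tensor

variable {V R}

/-- The underlying group of the tensor product of representations before dividing out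
by the relations coming from arrows. -/
noncomputable abbrev repTensorBase (Y : RepR V R) (X : RepL V R) : Type u :=
  ⨁ (i : V), NcTensor R (↑(Y.obj (vtx' (op i)))) (↑(X.obj (vtx' i)))

open scoped Classical in
/-- The relations defining the tensor product of representations. -/
noncomputable def repTensorRel (Y : RepR V R) (X : RepL V R) :
    @Submodule ℤ (repTensorBase Y X) _ AddCommGroup.toAddCommMonoid _ :=
  Submodule.span ℤ {z | ∃ (i j : V) (a : i ⟶ j) (y : ↑(Y.obj (vtx' (op j)))) (x : ↑(X.obj (vtx' i))),
    z = DirectSum.of _ i (NcTensor.tmul R _ _ (Y.map a.op.toPath y) x)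
      - DirectSum.of _ j (NcTensor.tmul R _ _ y (X.map a.toPath x))}

/-- The tensor product `Y ⊗_Q X` of representations, for `Y ∈ Rep(Qᵒᵖ, Rᵒᵖ)` and
`X ∈ Rep(Q, R)`. -/
noncomputable abbrev RepTensor (Y : RepR V R) (X : RepL V R) : Type u :=
  repTensorBase Y X ⧸ repTensorRel Y X

open scoped Classical in
/-- Functoriality of the tensor product of representations. -/
noncomputable def RepTensor.map {Y Y' : RepR V R} {X X' : RepL V R}
    (g : Y ⟶ Y') (f : X ⟶ X') : RepTensor Y X →ₗ[ℤ] RepTensor Y' X' :=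
  Submodule.mapQ _ _
    (DirectSum.toModule ℤ V (repTensorBase Y' X') fun i =>
      (DirectSum.lof ℤ V _ i).comp
        (NcTensor.map R ((g.app (vtx' (op i))).hom : _ →ₗ[Rᵐᵒᵖ] _) ((f.app (vtx' i)).hom : _ →ₗ[R] _)))
    (by
      refine Submodule.span_le.2 ?_
      rintro z ⟨i, j, a, y, x, rfl⟩
      refine Submodule.mem_comap.2 ?_
      rw [map_sub, ← DirectSum.lof_eq_of ℤ, ← DirectSum.lof_eq_of ℤ,
        DirectSum.toModule_lof, DirectSum.toModule_lof]
      refine Submodule.subset_span ?_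
      refine ⟨i, j, a, g.app (vtx' (op j)) y, f.app (vtx' i) x, ?_⟩
      have hg : g.app (vtx' (op i)) (Y.map a.op.toPath y)
          = Y'.map a.op.toPath (g.app (vtx' (op j)) y) := by
        have h := g.naturality (a.op.toPath : vtx' (op j) ⟶ vtx' (op i))
        exact ConcreteCategory.congr_hom h y
      have hf : f.app (vtx' j) (X.map a.toPath x)
          = X'.map a.toPath (f.app (vtx' i) x) := by
        have h := f.naturality (a.toPath : vtx' i ⟶ vtx' j)
        exact ConcreteCategory.congr_hom h x
      simp only [LinearMap.comp_apply, NcTensor.map_tmul, DirectSum.lof_eq_of]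
      rw [hg, hf])

end Tensor

end Reps




section More

variable (V : Type u) [Quiver.{u} V] (R : Type u) [Ring R]

/-- Cotorsion left `R`-modules. -/
def IsCotorsionModule (M : ModuleCat.{u} R) : Prop :=
  ∀ F : ModuleCat.{u} R, IsFlatModule R F → ext1Zero F M

/-- A right coherent ring: every finitely generated right ideal is finitely presented. -/
def RightCoherent : Prop :=
  ∀ I : Submodule Rᵐᵒᵖ R, I.FG → Module.FinitePresentation Rᵐᵒᵖ ↥I

/-- Flat representations: colimits of projective representations. -/
def IsFlatRep (Xr : RepL V R) : Prop :=
  ∃ (J : Cat.{u, u}) (D : ↥J ⥤ RepL V R) (c : Limits.Cocone D),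
    (∀ j, Projective (D.obj j)) ∧ Nonempty (Limits.IsColimit c) ∧ Nonempty (c.pt ≅ Xr)

/-- Gorenstein flat representations. -/
def IsGorensteinFlatRep (Xr : RepL V R) : Prop :=
  ∃ (F : ℤ → RepL V R) (d : ∀ n : ℤ, F (n + 1) ⟶ F n),
    (∀ n, IsFlatRep V R (F n)) ∧
    (∀ n, ∃ w : d (n + 1) ≫ d n = 0, (ShortComplex.mk (d (n + 1)) (d n) w).Exact) ∧
    Nonempty (Xr ≅ cokernel (d 0)) ∧
    ∀ (E : RepR V R), Injective E → ∀ n : ℤ,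
      Function.Exact (RepTensor.map (𝟙 E) (d (n + 1))) (RepTensor.map (𝟙 E) (d n))

/-- Projectively coresolved Gorenstein flat representations. -/
def IsPGFRep (Xr : RepL V R) : Prop :=
  ∃ (P : ℤ → RepL V R) (d : ∀ n : ℤ, P (n + 1) ⟶ P n),
    (∀ n, Projective (P n)) ∧
    (∀ n, ∃ w : d (n + 1) ≫ d n = 0, (ShortComplex.mk (d (n + 1)) (d n) w).Exact) ∧
    Nonempty (Xr ≅ cokernel (d 0)) ∧
    ∀ (E : RepR V R), Injective E → ∀ n : ℤ,
      Function.Exact (RepTensor.map (𝟙 E) (d (n + 1))) (RepTensor.map (𝟙 E) (d n))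

end More

section Swap

variable (R : Type u) [Ring R]
variable (M : Type u) [AddCommGroup M] [Module R M]
variable (E : Type u) [AddCommGroup E] [Module Rᵐᵒᵖ E]

/-- Relations for the tensor product `M ⊗_{Rᵒᵖ} E` of a right `Rᵒᵖ`-module `M`
and a left `Rᵒᵖ`-module `E`. -/
def ncRel' : Submodule ℤ (TensorProduct ℤ M E) :=
  Submodule.span ℤ {z | ∃ (m : M) (r : R) (e : E),
    z = (r • m) ⊗ₜ[ℤ] e - m ⊗ₜ[ℤ] (MulOpposite.op r • e)}

/-- The tensor product `M ⊗_{Rᵒᵖ} E`. -/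
abbrev NcTensorSwap := TensorProduct ℤ M E ⧸ ncRel' R M E

variable {M E}

/-- The generator `m ⊗ e` of `M ⊗_{Rᵒᵖ} E`. -/
noncomputable def NcTensorSwap.tmul (m : M) (e : E) : NcTensorSwap R M E :=
  Submodule.Quotient.mk (m ⊗ₜ[ℤ] e)

variable (V : Type u) [Quiver.{u} V]

/-- The base of the tensor product `X ⊗_{Qᵒᵖ} Y`. -/
noncomputable abbrev repTensorSwapBase (X : RepL V R) (Y : RepR V R) : Type u :=
  ⨁ (i : V), NcTensorSwap R (↑(X.obj i)) (↑(Y.obj (op i)))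

open scoped Classical in
/-- The relations of the tensor product `X ⊗_{Qᵒᵖ} Y`. -/
noncomputable def repTensorSwapRel (X : RepL V R) (Y : RepR V R) :
    @Submodule ℤ (repTensorSwapBase R V X Y) _ AddCommGroup.toAddCommMonoid _ :=
  Submodule.span ℤ {z | ∃ (j i : V) (a : j ⟶ i) (x : ↑(X.obj j)) (y : ↑(Y.obj (op i))),
    z = DirectSum.of _ i (NcTensorSwap.tmul R (X.map a.toPath x) y)
      - DirectSum.of _ j (NcTensorSwap.tmul R x (Y.map a.op.toPath y))}

/-- The tensor product `X ⊗_{Qᵒᵖ} Y` of representations, i.e. the tensor product over the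
opposite quiver of the opposite ring. -/
noncomputable abbrev RepTensorSwap (X : RepL V R) (Y : RepR V R) : Type u :=
  repTensorSwapBase R V X Y ⧸ repTensorSwapRel R V X Y

end Swap

section Eval

variable {V : Type u} [Quiver.{u} V] {R : Type u} [Ring R]

/-- Evaluation helper identifying the vertex value of `Hom(X, G)` with `Hom_ℤ(X(i), G)`. -/
def homRepEval (X : RepL V R) (G : Type u) [AddCommGroup G] {v : Vᵒᵖ}
    (s : ↑((HomRepObj V R X G).obj v)) : ↑(X.obj v.unop) →+ G := s

/-- Evaluation helper identifying the vertex value of `Hom(Y, G)` with `Hom_ℤ(Y(i), G)`. -/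
def homRepOpEval (Y : RepR V R) (G : Type u) [AddCommGroup G] {i : V}
    (s : ↑((HomRepObjOp V R Y G).obj i)) : ↑(Y.obj (op i)) →+ G := s

end Eval

end QuiverGF

namespace QuiverGF

section SwapProof

lemma pathsNat {W : Type u} [Quiver.{u} W] {C : Type v} [Category.{w} C] (F H : Paths W ⥤ C)
    (app : ∀ i : Paths W, F.obj i ⟶ H.obj i)
    (h : ∀ (i j : W) (a : i ⟶ j),
      F.map ((Paths.of W).map a) ≫ app ((Paths.of W).obj j)
        = app ((Paths.of W).obj i) ≫ H.map ((Paths.of W).map a))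
    {i j : Paths W} (p : i ⟶ j) : F.map p ≫ app j = app i ≫ H.map p := by
  refine Paths.induction (V := W) (P := fun {i j} p => F.map p ≫ app j = app i ≫ H.map p) ?_ ?_ p
  · intro v
    rw [F.map_id, H.map_id, Category.id_comp, Category.comp_id]
  · intro x y z p q hp
    rw [F.map_comp, H.map_comp, Category.assoc, h, ← Category.assoc, hp, Category.assoc]

variable {R : Type u} [Ring R] {G : Type u} [AddCommGroup G]
variable {M : Type u} [AddCommGroup M] [Module R M]
variable {E : Type u} [AddCommGroup E] [Module Rᵐᵒᵖ E]

def swapRL (φ : E →ₗ[Rᵐᵒᵖ] (M →+ G)) : M →ₗ[R] (E →+ G) where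
  toFun m := (AddMonoidHom.eval m).comp φ.toAddMonoidHom
  map_add' m n := AddMonoidHom.ext fun e => (φ e).map_add m n
  map_smul' r m := AddMonoidHom.ext fun e => by
    have := DFunLike.congr_fun (φ.map_smul (MulOpposite.op r) e) m
    exact this.symm

def swapLR (φ : M →ₗ[R] (E →+ G)) : E →ₗ[Rᵐᵒᵖ] (M →+ G) where
  toFun m := (AddMonoidHom.eval m).comp φ.toAddMonoidHom
  map_add' m n := AddMonoidHom.ext fun e => (φ e).map_add m n
  map_smul' r m := AddMonoidHom.ext fun e => by
    have := DFunLike.congr_fun (φ.map_smul r.unop e) m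
    exact this.symm

variable {V : Type u} [Quiver.{u} V] (X : RepL V R) (Y : RepR V R)

variable (G) in
lemma homRep_map {i j : V} (a : i ⟶ j) (s : ↑((HomRepObj V R X G).obj (op j)))
    (x : ↑(X.obj (vtx' i))) :
    homRepEval X G (v := op i) ((HomRepObj V R X G).map ((Paths.of Vᵒᵖ).map a.op) s) x
      = homRepEval X G (v := op j) s (X.map ((Paths.of V).map a) x) := by
  have := Paths.lift_toPath (V := Vᵒᵖ)
    { obj := fun x => ModuleCat.of Rᵐᵒᵖ (↑(X.obj (vtx' x.unop)) →+ G)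
      map := fun {x y} a =>
        ModuleCat.ofHom (precompHom (G := G) ((X.map a.unop.toPath).hom : ↑(X.obj (vtx' y.unop)) →ₗ[R] ↑(X.obj (vtx' x.unop))) :
          _ →ₗ[Rᵐᵒᵖ] _) } a.op
  exact DFunLike.congr_fun (F := ↑(X.obj (vtx' i)) →+ G) (ConcreteCategory.congr_hom this s) x

variable (G) in
lemma homRepOp_map {i j : V} (a : i ⟶ j) (s : ↑((HomRepObjOp V R Y G).obj i))
    (y : ↑(Y.obj (vtx' (op j)))) :
    homRepOpEval Y G (i := j) ((HomRepObjOp V R Y G).map ((Paths.of V).map a) s) y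
      = homRepOpEval Y G (i := i) s (Y.map ((Paths.of Vᵒᵖ).map a.op) y) := by
  have := Paths.lift_toPath (V := V)
    { obj := fun i => ModuleCat.of R (↑(Y.obj (vtx' (op i))) →+ G)
      map := fun {i j} a =>
        ModuleCat.ofHom (precompHomOp (G := G) ((Y.map a.op.toPath).hom : ↑(Y.obj (vtx' (op j))) →ₗ[Rᵐᵒᵖ] ↑(Y.obj (vtx' (op i)))) :
          _ →ₗ[R] _) } a
  exact DFunLike.congr_fun (F := ↑(Y.obj (vtx' (op j))) →+ G) (ConcreteCategory.congr_hom this s) y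

variable {X Y}

noncomputable def fwd (f : Y ⟶ HomRepObj V R X G) : X ⟶ HomRepObjOp V R Y G where
  app i := ModuleCat.ofHom (swapRL (G := G) (M := ↑(X.obj i)) (E := ↑(Y.obj (op i)))
    (f.app (op i)).hom)
  naturality i j p := by
    refine pathsNat X (HomRepObjOp V R Y G) (fun i => ModuleCat.ofHom (swapRL (G := G)
      (M := ↑(X.obj i)) (E := ↑(Y.obj (op i))) (f.app (op i)).hom)) ?_ p
    intro i j a
    refine ConcreteCategory.hom_ext _ _ fun x => ?_
    refine AddMonoidHom.ext (M := ↑(Y.obj (vtx' (op j)))) (N := G) fun y => ?_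
    have h1 := homRepOp_map G Y a (swapRL (G := G) (M := ↑(X.obj i)) (E := ↑(Y.obj (op i)))
      (f.app (op i)).hom x) y
    have h2 := homRep_map G X a (f.app (op j) y) x
    have h3 := ConcreteCategory.congr_hom (f.naturality ((Paths.of Vᵒᵖ).map a.op)) y
    have h4 := DFunLike.congr_fun (F := ↑(X.obj (vtx' i)) →+ G) h3 x
    exact h2.symm.trans (h4.symm.trans h1.symm)

noncomputable def bwd (f : X ⟶ HomRepObjOp V R Y G) : Y ⟶ HomRepObj V R X G where
  app i := ModuleCat.ofHom (swapLR (G := G) (M := ↑(X.obj i.unop)) (E := ↑(Y.obj i))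
    (f.app i.unop).hom)
  naturality i j p := by
    refine pathsNat Y (HomRepObj V R X G) (fun i => ModuleCat.ofHom (swapLR (G := G)
      (M := ↑(X.obj (unop i))) (E := ↑(Y.obj i)) (f.app (unop i)).hom)) ?_ p
    intro j i a
    refine ConcreteCategory.hom_ext _ _ fun y => ?_
    refine AddMonoidHom.ext (M := ↑(X.obj (vtx' i.unop))) (N := G) fun x => ?_
    have h1 := homRep_map G X a.unop (swapLR (G := G) (M := ↑(X.obj j.unop)) (E := ↑(Y.obj j))
      (f.app j.unop).hom y) x
    have h2 := homRepOp_map G Y a.unop (f.app i.unop x) y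
    have h3 := ConcreteCategory.congr_hom (f.naturality ((Paths.of V).map a.unop)) x
    have h4 := DFunLike.congr_fun (F := ↑(Y.obj (vtx' j)) →+ G) h3 y
    exact h2.symm.trans (h4.symm.trans h1.symm)

end SwapProof

end QuiverGF

section Statements

open CategoryTheory CategoryTheory.Limits Opposite QuiverGF
open scoped DirectSum

theorem stmt6 (R : Type u) [Ring R] (V : Type u) [Quiver.{u} V]
    (X : RepL V R) (Y : RepR V R) (G : Type u) [AddCommGroup G] :
    ∃ e : (Y ⟶ HomRepObj V R X G) ≃+ (X ⟶ HomRepObjOp V R Y G),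
      ∀ (f : Y ⟶ HomRepObj V R X G) (i : V) (x : ↑(X.obj i)) (y : ↑(Y.obj (op i))),
        homRepOpEval Y G ((e f).app i x) y = homRepEval X G (f.app (op i) y) x := by
  refine ⟨{ toFun := fwd, invFun := bwd, left_inv := ?_, right_inv := ?_, map_add' := ?_ }, ?_⟩
  · intro f
    exact NatTrans.ext (funext fun i => rfl)
  · intro f
    exact NatTrans.ext (funext fun i => rfl)
  · intro f g
    exact NatTrans.ext (funext fun i => rfl)
  · intro f i x y
    rfl

end Statements
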